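/- Let ε > 0, Δ > 0 and let i ≥ 2 be an integer. For every μ_a ∈ 𝒫_i^{(b)} with density sequence (a_k), there exist an integer k* with 0 ≤ k* ≤ i−2 and a measure μ_b ∈ 𝒫_i^{(b)} with density sequence (b_k) such that b₀ = b₁ = ⋯ = b_{k*}, b₀ = e^ε · b_{i−1}, and V(μ_b) ≤ V(μ_a). (Lemma 6.) -/

import Mathlib

open MeasureTheory Real Filter
open scoped ENNReal Topology

noncomputable section

/-- The ℓ¹ norm on ℝ². -/
def l1 (x : ℝ × ℝ) : ℝ := |x.1| + |x.2|

/-- The ε-differential-privacy constraint on a measure on ℝ² with sensitivity Δ. -/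
def DPC (ε Δ : ℝ) (μ : Measure (ℝ × ℝ)) : Prop :=
  ∀ S : Set (ℝ × ℝ), MeasurableSet S → ∀ t : ℝ × ℝ, l1 t ≤ Δ →
    μ S ≤ ENNReal.ofReal (Real.exp ε) * μ ((· + t) '' S)

/-- Expected ℓ¹ cost of a noise distribution. -/
def cost (μ : Measure (ℝ × ℝ)) : ℝ≥0∞ := ∫⁻ x, ENNReal.ofReal (l1 x) ∂μ

/-- The index k of the ℓ¹ layer A_i(k) = {x : kΔ/i ≤ ‖x‖₁ < (k+1)Δ/i} containing x. -/
def layerIdx (Δ : ℝ) (i : ℕ) (x : ℝ × ℝ) : ℕ := ⌊l1 x * i / Δ⌋₊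

/-- μ has a density w.r.t. Lebesgue measure which is constant on each ℓ¹ layer
A_i(k), with constant value a_k on A_i(k); (a_k) is the density sequence of μ. -/
def HasDensitySeq (Δ : ℝ) (i : ℕ) (μ : Measure (ℝ × ℝ)) (a : ℕ → ℝ≥0∞) : Prop :=
  μ = MeasureTheory.volume.withDensity (fun x => a (layerIdx Δ i x))

/-- Membership in 𝒫: probability measures satisfying the ε-DP constraint. -/
def MemP (ε Δ : ℝ) (μ : Measure (ℝ × ℝ)) : Prop :=
  IsProbabilityMeasure μ ∧ DPC ε Δ μ

/-- Membership in 𝒫_{i,sym}: members of 𝒫 with layer-constant density. -/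
def MemPsym (ε Δ : ℝ) (i : ℕ) (μ : Measure (ℝ × ℝ)) : Prop :=
  MemP ε Δ μ ∧ ∃ a : ℕ → ℝ≥0∞, HasDensitySeq Δ i μ a

/-- Membership in 𝒫_i^{(a)}: layer-constant density with nonincreasing density sequence. -/
def MemPa (ε Δ : ℝ) (i : ℕ) (μ : Measure (ℝ × ℝ)) : Prop :=
  MemP ε Δ μ ∧ ∃ a : ℕ → ℝ≥0∞, HasDensitySeq Δ i μ a ∧ Antitone a

/-- Membership in 𝒫_i^{(b)}: additionally the density sequence decays geometrically,
a_k = e^ε · a_{k+i} for all k. -/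
def MemPb (ε Δ : ℝ) (i : ℕ) (μ : Measure (ℝ × ℝ)) : Prop :=
  MemP ε Δ μ ∧ ∃ a : ℕ → ℝ≥0∞, HasDensitySeq Δ i μ a ∧ Antitone a ∧
    ∀ k : ℕ, a k = ENNReal.ofReal (Real.exp ε) * a (k + i)

/-- Membership in 𝒫_i^{(c)}: additionally a₀ = e^ε · a_{i−1} and
a₀ = a₁ = ⋯ = a_k for some 0 ≤ k ≤ i−2. -/
def MemPc (ε Δ : ℝ) (i : ℕ) (μ : Measure (ℝ × ℝ)) : Prop :=
  MemP ε Δ μ ∧ ∃ a : ℕ → ℝ≥0∞, HasDensitySeq Δ i μ a ∧ Antitone a ∧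
    (∀ k : ℕ, a k = ENNReal.ofReal (Real.exp ε) * a (k + i)) ∧
    a 0 = ENNReal.ofReal (Real.exp ε) * a (i - 1) ∧
    ∃ k : ℕ, k ≤ i - 2 ∧ ∀ j : ℕ, j ≤ k → a j = a 0

/-- Membership in 𝒫_i^{(d)}: members of 𝒫_i^{(c)} whose density sequence takes only
the two values a₀ and a_{i−1} on each period: for some 1 ≤ k ≤ i−2, a_j = a₀ for
0 ≤ j < k and a_j = a_{i−1} for k < j ≤ i−1. -/
def MemPd (ε Δ : ℝ) (i : ℕ) (μ : Measure (ℝ × ℝ)) : Prop :=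
  MemP ε Δ μ ∧ ∃ a : ℕ → ℝ≥0∞, HasDensitySeq Δ i μ a ∧ Antitone a ∧
    (∀ k : ℕ, a k = ENNReal.ofReal (Real.exp ε) * a (k + i)) ∧
    a 0 = ENNReal.ofReal (Real.exp ε) * a (i - 1) ∧
    (∃ k : ℕ, k ≤ i - 2 ∧ ∀ j : ℕ, j ≤ k → a j = a 0) ∧
    ∃ k : ℕ, 1 ≤ k ∧ k ≤ i - 2 ∧ (∀ j : ℕ, j < k → a j = a 0) ∧
      ∀ j : ℕ, k < j → j ≤ i - 1 → a j = a (i - 1)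

/-! ### Layer integrals -/

lemma l1_nonneg (x : ℝ × ℝ) : 0 ≤ l1 x := by unfold l1; positivity

lemma continuous_l1 : Continuous l1 := by unfold l1; fun_prop

lemma measurable_l1 : Measurable l1 := continuous_l1.measurable

lemma measurable_layerIdx (Δ : ℝ) (i : ℕ) : Measurable (layerIdx Δ i) := by
  unfold layerIdx
  exact Nat.measurable_floor.comp ((measurable_l1.mul_const _).div_const _)

lemma l1_smul (r : ℝ) (hr : 0 ≤ r) (x : ℝ × ℝ) : l1 (r • x) = r * l1 x := by
  simp [l1, abs_mul, abs_of_nonneg hr, mul_add]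

lemma l1_add_le (x t : ℝ × ℝ) : l1 (x + t) ≤ l1 x + l1 t := by
  have h1 := abs_add_le x.1 t.1
  have h2 := abs_add_le x.2 t.2
  simp only [l1, Prod.fst_add, Prod.snd_add]
  linarith

/-- The power of the ℓ¹ norm as an extended nonnegative function. -/
def F (p : ℕ) (x : ℝ × ℝ) : ℝ≥0∞ := ENNReal.ofReal (l1 x) ^ p

lemma measurable_F (p : ℕ) : Measurable (F p) := by
  unfold F
  exact (measurable_l1.ennreal_ofReal).pow_const p

/-- The open ℓ¹ ball. -/
def Bl (r : ℝ) : Set (ℝ × ℝ) := {x | l1 x < r}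

lemma measurableSet_Bl (r : ℝ) : MeasurableSet (Bl r) := measurableSet_lt measurable_l1 measurable_const

/-- The integral of `F p` over the unit ball. -/
def K (p : ℕ) : ℝ≥0∞ := ∫⁻ x in Bl 1, F p x

lemma K_ne_top (p : ℕ) : K p ≠ ⊤ := by
  have h1 : K p ≤ ∫⁻ x in Bl 1, 1 := by
    refine setLIntegral_mono measurable_const fun x hx => ?_
    refine pow_le_one₀ zero_le ?_
    rw [← ENNReal.ofReal_one]
    exact ENNReal.ofReal_le_ofReal (le_of_lt hx)
  refine ne_top_of_le_ne_top ?_ h1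
  have h2 : Bl 1 ⊆ Metric.ball (0 : ℝ × ℝ) 1 := by
    intro x hx
    have hx' : |x.1| + |x.2| < 1 := hx
    rw [mem_ball_zero_iff, Prod.norm_def, max_lt_iff, Real.norm_eq_abs, Real.norm_eq_abs]
    constructor <;> nlinarith [abs_nonneg x.1, abs_nonneg x.2]
  simp only [lintegral_const, one_mul, Measure.restrict_apply_univ]
  exact ne_top_of_le_ne_top Metric.isBounded_ball.measure_lt_top.ne (measure_mono h2)

lemma K_zero_ne_zero : K 0 ≠ 0 := by
  have : K 0 = volume (Bl 1) := by simp [K, F]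
  rw [this]
  have ho : IsOpen (Bl 1) := isOpen_lt continuous_l1 continuous_const
  exact (ho.measure_pos volume ⟨0, by simp [Bl, l1]⟩).ne'

lemma lintegral_Bl (p : ℕ) (r : ℝ) (hr : 0 ≤ r) :
    ∫⁻ x in Bl r, F p x = ENNReal.ofReal (r ^ (p + 2)) * K p := by
  rcases hr.eq_or_lt with rfl | hr
  · have : Bl 0 = ∅ := by
      ext x; simp [Bl, l1_nonneg x]
    simp [this]
  have hm := Measure.map_addHaar_smul (volume : Measure (ℝ × ℝ)) (inv_ne_zero hr.ne')
  have hf : Module.finrank ℝ (ℝ × ℝ) = 2 := by simp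
  rw [hf] at hm
  have h1 : ∫⁻ x in Bl 1, F p x ∂(Measure.map (fun x => r⁻¹ • x) (volume : Measure (ℝ × ℝ)))
      = ENNReal.ofReal (r ^ 2) * K p := by
    have h3 : |((r⁻¹) ^ 2)⁻¹| = r ^ 2 := by
      rw [inv_pow, inv_inv, abs_of_nonneg (by positivity)]
    rw [hm, Measure.restrict_smul, lintegral_smul_measure, h3, K, smul_eq_mul]
  rw [setLIntegral_map (measurableSet_Bl 1) (measurable_F p) (by fun_prop)] at h1
  have h2 : (fun x : ℝ × ℝ => r⁻¹ • x) ⁻¹' Bl 1 = Bl r := by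
    ext x
    simp only [Bl, Set.mem_preimage, Set.mem_ofPred_eq]
    rw [l1_smul _ (by positivity), inv_mul_lt_iff₀ hr, mul_one]
  rw [h2] at h1
  have h4 : ∀ x, F p x = ENNReal.ofReal (r ^ p) * F p (r⁻¹ • x) := by
    intro x
    unfold F
    rw [l1_smul _ (by positivity), ← ENNReal.ofReal_pow (l1_nonneg x),
      ← ENNReal.ofReal_pow (by have := l1_nonneg x; positivity),
      ← ENNReal.ofReal_mul (by positivity), ← mul_pow, mul_inv_cancel_left₀ hr.ne']
  rw [lintegral_congr h4, lintegral_const_mul' _ _ ENNReal.ofReal_ne_top, h1, ← mul_assoc,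
    ← ENNReal.ofReal_mul (by positivity), pow_add]

/-- The relative weight of layer `k`. -/
def Nw (p k : ℕ) : ℝ := ((k : ℝ) + 1) ^ (p + 2) - (k : ℝ) ^ (p + 2)

lemma Nw_nonneg (p k : ℕ) : 0 ≤ Nw p k := by
  unfold Nw
  rw [sub_nonneg]
  gcongr
  linarith

/-- The scale constant of the layer integrals. -/
def Kc (Δ : ℝ) (i p : ℕ) : ℝ≥0∞ := ENNReal.ofReal ((Δ / i) ^ (p + 2)) * K p

lemma lintegral_layer (Δ : ℝ) (hΔ : 0 < Δ) (i : ℕ) (hi : 0 < i) (p k : ℕ) :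
    ∫⁻ x in layerIdx Δ i ⁻¹' {k}, F p x = Kc Δ i p * ENNReal.ofReal (Nw p k) := by
  have hi' : (0 : ℝ) < i := by exact_mod_cast hi
  set h : ℝ := Δ / i with hh
  have hh0 : 0 < h := by positivity
  have hidx : ∀ x, layerIdx Δ i x = k ↔ k * h ≤ l1 x ∧ l1 x < (k + 1) * h := by
    intro x
    have hx := l1_nonneg x
    unfold layerIdx
    rw [Nat.floor_eq_iff (by positivity), le_div_iff₀ hΔ, div_lt_iff₀ hΔ, hh, ← mul_div_assoc,
      ← mul_div_assoc, div_le_iff₀ hi', lt_div_iff₀ hi']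
  have hU : Bl ((k + 1) * h) = Bl (k * h) ∪ layerIdx Δ i ⁻¹' {k} := by
    ext x
    simp only [Set.mem_union, Set.mem_preimage, Set.mem_singleton_iff, hidx, Bl, Set.mem_ofPred_eq]
    constructor
    · intro hx
      rcases lt_or_ge (l1 x) (k * h) with h1 | h1
      · exact Or.inl h1
      · exact Or.inr ⟨h1, hx⟩
    · rintro (hx | hx)
      · nlinarith
      · exact hx.2
  have hD : Disjoint (Bl (k * h)) (layerIdx Δ i ⁻¹' {k}) := by
    rw [Set.disjoint_left]
    intro x hx hx'
    have := (hidx x).1 hx'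
    exact absurd this.1 (not_le.2 hx)
  have hE := lintegral_Bl p ((k + 1) * h) (by positivity)
  rw [hU, lintegral_union ((measurable_layerIdx Δ i) (measurableSet_singleton k)) hD,
    lintegral_Bl p (k * h) (by positivity)] at hE
  have hne : ENNReal.ofReal ((k * h) ^ (p + 2)) * K p ≠ ⊤ :=
    ENNReal.mul_ne_top ENNReal.ofReal_ne_top (K_ne_top p)
  refine (ENNReal.add_right_inj hne).1 (hE.trans ?_)
  have : ((k + 1) * h) ^ (p + 2) = (k * h) ^ (p + 2) + h ^ (p + 2) * Nw p k := by
    unfold Nw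
    rw [mul_pow, mul_pow]; ring
  rw [this, ENNReal.ofReal_add (by positivity) (mul_nonneg (by positivity) (Nw_nonneg p k)),
    ENNReal.ofReal_mul (by positivity), add_mul, Kc]
  ring

/-- The functional associated with moment `p`. -/
def Mo (Δ : ℝ) (i p : ℕ) (a : ℕ → ℝ≥0∞) : ℝ≥0∞ :=
  ∫⁻ x, F p x ∂(volume.withDensity (fun x => a (layerIdx Δ i x)))

lemma measurable_dens (Δ : ℝ) (i : ℕ) (a : ℕ → ℝ≥0∞) :
    Measurable (fun x => a (layerIdx Δ i x)) :=
  (measurable_of_countable a).comp (measurable_layerIdx Δ i)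

lemma Mo_eq (Δ : ℝ) (hΔ : 0 < Δ) (i : ℕ) (hi : 0 < i) (p : ℕ) (a : ℕ → ℝ≥0∞) :
    Mo Δ i p a = ∑' k, a k * (Kc Δ i p * ENNReal.ofReal (Nw p k)) := by
  have hm := measurable_dens Δ i a
  have h1 : Mo Δ i p a = ∫⁻ x, a (layerIdx Δ i x) ∂(volume.withDensity (F p)) := by
    rw [Mo, lintegral_withDensity_eq_lintegral_mul _ hm (measurable_F p),
      lintegral_withDensity_eq_lintegral_mul _ (measurable_F p) hm, mul_comm]
  rw [h1, ← lintegral_map (measurable_of_countable a) (measurable_layerIdx Δ i),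
    lintegral_countable']
  refine tsum_congr fun k => ?_
  rw [Measure.map_apply (measurable_layerIdx Δ i) (measurableSet_singleton k),
    withDensity_apply _ ((measurable_layerIdx Δ i) (measurableSet_singleton k)),
    lintegral_layer Δ hΔ i hi]

/-! ### The series over residue classes -/

/-- Weight of a residue class. -/
def wt (q : ℝ) (i p j : ℕ) : ℝ := ∑' n : ℕ, q ^ n * Nw p (n * i + j)

lemma geo_iter (ε : ℝ) (i : ℕ) (x : ℕ → ℝ≥0∞)
    (hx : ∀ k, x k = ENNReal.ofReal (Real.exp ε) * x (k + i)) (n j : ℕ) :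
    x (n * i + j) = ENNReal.ofReal (Real.exp (-ε) ^ n) * x j := by
  induction n with
  | zero => simp
  | succ n ih =>
    have h := hx (n * i + j)
    have h2 : x (n * i + j + i) = ENNReal.ofReal (Real.exp (-ε)) * x (n * i + j) := by
      rw [h, ← mul_assoc, ← ENNReal.ofReal_mul (by positivity), ← Real.exp_add]
      simp
    rw [show (n + 1) * i + j = n * i + j + i by ring, h2, ih, ← mul_assoc,
      ← ENNReal.ofReal_mul (by positivity), pow_succ']

lemma hasSum_of {f g : ℕ → ℝ} {s t : ℝ} (h : HasSum f s) (hf : ∀ n, g n = f n) (hs : t = s) :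
    HasSum g t := by
  rw [hs, funext hf]; exact h

lemma sums (q : ℝ) (h0 : 0 < q) (h1 : q < 1) :
    HasSum (fun n : ℕ => q ^ n) (1 / (1 - q)) ∧
    HasSum (fun n : ℕ => q ^ n * n) (q / (1 - q) ^ 2) ∧
    HasSum (fun n : ℕ => q ^ n * (n : ℝ) ^ 2) (q * (1 + q) / (1 - q) ^ 3) := by
  have hq : ‖q‖ < 1 := by rw [Real.norm_eq_abs, abs_of_pos h0]; exact h1
  have hne : 1 - q ≠ 0 := by linarith
  have s0 := hasSum_choose_mul_geometric_of_norm_lt_one 0 hq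
  have s1 := hasSum_choose_mul_geometric_of_norm_lt_one 1 hq
  have s2 := hasSum_choose_mul_geometric_of_norm_lt_one 2 hq
  have e2 : ∀ n : ℕ, (((n + 2).choose 2 : ℕ) : ℝ) = ((n : ℝ) + 2) * (n + 1) / 2 := by
    intro n
    rw [Nat.cast_choose_two]
    push_cast
    ring
  simp only [e2, Nat.choose_one_right, Nat.choose_zero_right, Nat.cast_one, one_mul, zero_add,
    pow_one] at s0 s1 s2
  refine ⟨s0, ?_, ?_⟩
  · refine hasSum_of (s1.sub s0) ?_ ?_
    · intro n; push_cast; ring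
    · field_simp; ring
  · refine hasSum_of (((s2.mul_left 2).sub (s1.mul_left 3)).add s0) ?_ ?_
    · intro n; push_cast; ring
    · field_simp; ring

lemma hasSum_wt_zero (q : ℝ) (h0 : 0 < q) (h1 : q < 1) (i j : ℕ) :
    HasSum (fun n : ℕ => q ^ n * Nw 0 (n * i + j))
      ((2 * j + 1) * (1 / (1 - q)) + 2 * i * (q / (1 - q) ^ 2)) := by
  obtain ⟨s0, s1, s2⟩ := sums q h0 h1
  refine hasSum_of ((s0.mul_left (2 * (j : ℝ) + 1)).add (s1.mul_left (2 * (i : ℝ)))) ?_ rfl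
  intro n; simp only [Nw]; push_cast; ring

lemma hasSum_wt_one (q : ℝ) (h0 : 0 < q) (h1 : q < 1) (i j : ℕ) :
    HasSum (fun n : ℕ => q ^ n * Nw 1 (n * i + j))
      ((3 * j ^ 2 + 3 * j + 1) * (1 / (1 - q)) + (6 * i * j + 3 * i) * (q / (1 - q) ^ 2)
        + 3 * i ^ 2 * (q * (1 + q) / (1 - q) ^ 3)) := by
  obtain ⟨s0, s1, s2⟩ := sums q h0 h1
  refine hasSum_of (((s0.mul_left (3 * (j : ℝ) ^ 2 + 3 * j + 1)).add
    (s1.mul_left (6 * (i : ℝ) * j + 3 * i))).add (s2.mul_left (3 * (i : ℝ) ^ 2))) ?_ rfl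
  intro n; simp only [Nw]; push_cast; ring

lemma wt_nonneg (q : ℝ) (h0 : 0 < q) (i p j : ℕ) : 0 ≤ wt q i p j :=
  tsum_nonneg fun n => mul_nonneg (by positivity) (Nw_nonneg _ _)

/-- The last residue class has the largest cost per unit of mass. -/
lemma wt_ineq (q : ℝ) (h0 : 0 < q) (h1 : q < 1) (i j : ℕ) (hj : j < i) :
    wt q i 1 j * wt q i 0 (i - 1) ≤ wt q i 1 (i - 1) * wt q i 0 j := by
  unfold wt
  rw [(hasSum_wt_one q h0 h1 i j).tsum_eq, (hasSum_wt_zero q h0 h1 i j).tsum_eq,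
    (hasSum_wt_one q h0 h1 i (i - 1)).tsum_eq, (hasSum_wt_zero q h0 h1 i (i - 1)).tsum_eq]
  rw [Nat.cast_sub (by omega : 1 ≤ i), Nat.cast_one]
  have hr : 0 < 1 - q := by linarith
  obtain ⟨m, hm⟩ : ∃ m, m = q / (1 - q) := ⟨_, rfl⟩
  have hm0 : 0 < m := by rw [hm]; positivity
  have e0 : 1 / (1 - q) = 1 + m := by rw [hm]; field_simp; ring
  have e1 : q / (1 - q) ^ 2 = m * (1 + m) := by rw [hm]; field_simp; ring
  have e2 : q * (1 + q) / (1 - q) ^ 3 = m * (1 + 2 * m) * (1 + m) := by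
    rw [hm]; field_simp; ring
  rw [e0, e1, e2]
  have hji : (j : ℝ) + 1 ≤ i := by exact_mod_cast hj
  have hj0 : (0 : ℝ) ≤ j := by positivity
  generalize (i : ℝ) = I at *
  generalize (j : ℝ) = J at *
  have key : 0 ≤ (1 + m) ^ 2 * 6 * ((I - 1 - J) *
      ((J + 1 / 2 + I * m) * (I - 1 / 2 + I * m) - (1 / 12 + I ^ 2 * (m * (1 + m))))) := by
    apply mul_nonneg (by positivity)
    apply mul_nonneg (by linarith)
    have : (J + 1 / 2 + I * m) * (I - 1 / 2 + I * m) - (1 / 12 + I ^ 2 * (m * (1 + m)))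
      = J * (I - 1 / 2 + I * m) + (I / 2 - 1 / 3) := by ring
    rw [this]
    have h3 : 0 ≤ I * m := mul_nonneg (by linarith) hm0.le
    have h4 : 0 ≤ J * (I - 1 / 2 + I * m) := mul_nonneg hj0 (by linarith)
    linarith
  nlinarith [key]

lemma Mo_geo (ε Δ : ℝ) (hε : 0 < ε) (hΔ : 0 < Δ) (i : ℕ) (hi : 0 < i) (p : ℕ) (hp : p ≤ 1)
    (x : ℕ → ℝ≥0∞) (hx : ∀ k, x k = ENNReal.ofReal (Real.exp ε) * x (k + i)) :
    Mo Δ i p x = ∑ j : Fin i, x j * (Kc Δ i p * ENNReal.ofReal (wt (Real.exp (-ε)) i p j)) := by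
  have : NeZero i := ⟨hi.ne'⟩
  have hq1 : Real.exp (-ε) < 1 := by rw [Real.exp_lt_one_iff]; linarith
  have hq0 := Real.exp_pos (-ε)
  rw [Mo_eq Δ hΔ i hi, ← (Nat.divModEquiv i).symm.tsum_eq]
  have h1 : ∀ c : ℕ × Fin i, x ((Nat.divModEquiv i).symm c) *
      (Kc Δ i p * ENNReal.ofReal (Nw p ((Nat.divModEquiv i).symm c))) =
      (fun (n : ℕ) (j : Fin i) => x (n * i + j) *
        (Kc Δ i p * ENNReal.ofReal (Nw p (n * i + j)))) c.1 c.2 := fun c => rfl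
  rw [tsum_congr h1, ENNReal.tsum_prod (f := fun (n : ℕ) (j : Fin i) => x (n * i + j) *
        (Kc Δ i p * ENNReal.ofReal (Nw p (n * i + j)))), ENNReal.tsum_comm, tsum_fintype]
  refine Finset.sum_congr rfl fun j _ => ?_
  have hs : Summable (fun n : ℕ => Real.exp (-ε) ^ n * Nw p (n * i + j)) := by
    interval_cases p
    · exact (hasSum_wt_zero _ hq0 hq1 i j).summable
    · exact (hasSum_wt_one _ hq0 hq1 i j).summable
  rw [wt, ENNReal.ofReal_tsum_of_nonneg
    (fun n => mul_nonneg (by positivity) (Nw_nonneg _ _)) hs, ← ENNReal.tsum_mul_left,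
    ← ENNReal.tsum_mul_left]
  refine tsum_congr fun n => ?_
  rw [geo_iter ε i x hx, ENNReal.ofReal_mul (by positivity)]
  ring

/-! ### The privacy constraint -/

lemma dpc_of (ε Δ : ℝ) (hΔ : 0 < Δ) (i : ℕ) (b : ℕ → ℝ≥0∞)
    (hb : Antitone b) (hg : ∀ k, b k = ENNReal.ofReal (Real.exp ε) * b (k + i)) :
    DPC ε Δ (volume.withDensity (fun x => b (layerIdx Δ i x))) := by
  intro S hS t ht
  have he : MeasurableEmbedding (fun x : ℝ × ℝ => x + t) := measurableEmbedding_addRight t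
  rw [withDensity_apply _ hS, withDensity_apply _ (he.measurableSet_image.2 hS),
    ← (measurePreserving_add_right volume t).setLIntegral_comp_emb he,
    ← lintegral_const_mul' _ _ ENNReal.ofReal_ne_top]
  refine lintegral_mono fun x => ?_
  simp only
  rw [hg]
  gcongr
  apply hb
  have hx := l1_nonneg x
  unfold layerIdx
  rw [← Nat.floor_add_natCast (by positivity)]
  apply Nat.floor_le_floor
  have h1 := l1_add_le x t
  rw [div_le_iff₀ hΔ, add_mul, div_mul_cancel₀ _ hΔ.ne', mul_comm (i : ℝ) Δ, ← add_mul]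
  gcongr
  linarith

/-! ### The modification -/

/-- Lower the last value of each period to the next one. -/
def lo (i : ℕ) (a : ℕ → ℝ≥0∞) (k : ℕ) : ℝ≥0∞ := if k % i = i - 1 then a (k + 1) else a k

/-- The part removed by `lo`. -/
def rem (i : ℕ) (a : ℕ → ℝ≥0∞) (k : ℕ) : ℝ≥0∞ := if k % i = i - 1 then a k - a (k + 1) else 0

lemma lo_add_rem (i : ℕ) (a : ℕ → ℝ≥0∞) (ha : Antitone a) (k : ℕ) :
    a k = lo i a k + rem i a k := by
  unfold lo rem
  split_ifs
  · rw [add_tsub_cancel_of_le (ha (Nat.le_succ k))]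
  · simp

lemma lo_le (i : ℕ) (a : ℕ → ℝ≥0∞) (ha : Antitone a) (k : ℕ) : lo i a k ≤ a k := by
  unfold lo
  split_ifs
  · exact ha (Nat.le_succ k)
  · exact le_rfl

lemma lo_anti (i : ℕ) (a : ℕ → ℝ≥0∞) (ha : Antitone a) : Antitone (lo i a) := by
  refine antitone_nat_of_succ_le fun k => (lo_le i a ha _).trans ?_
  unfold lo
  split_ifs
  · exact le_rfl
  · exact ha (Nat.le_succ k)

/-- Lemma 6: for i ≥ 2, given μ_a ∈ 𝒫_i^{(b)} with density sequence (a_k), there are an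
integer 0 ≤ k* ≤ i−2 and μ_b ∈ 𝒫_i^{(b)} with density sequence (b_k) such that
b₀ = b₁ = ⋯ = b_{k*}, b₀ = e^ε · b_{i−1}, and V(μ_b) ≤ V(μ_a). -/
theorem exists_flat_head (ε Δ : ℝ) (hε : 0 < ε) (hΔ : 0 < Δ) (i : ℕ) (hi : 2 ≤ i)
    (μa : Measure (ℝ × ℝ)) (a : ℕ → ℝ≥0∞) (hμa : MemP ε Δ μa)
    (ha_dens : HasDensitySeq Δ i μa a) (ha_mono : Antitone a)
    (ha_geo : ∀ k : ℕ, a k = ENNReal.ofReal (Real.exp ε) * a (k + i)) :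
    ∃ (kstar : ℕ) (μb : Measure (ℝ × ℝ)) (b : ℕ → ℝ≥0∞),
      kstar ≤ i - 2 ∧
      MemP ε Δ μb ∧ HasDensitySeq Δ i μb b ∧ Antitone b ∧
      (∀ k : ℕ, b k = ENNReal.ofReal (Real.exp ε) * b (k + i)) ∧
      (∀ j : ℕ, j ≤ kstar → b j = b 0) ∧
      b 0 = ENNReal.ofReal (Real.exp ε) * b (i - 1) ∧
      cost μb ≤ cost μa := by
  have hi0 : 0 < i := by omega
  have hlo_geo : ∀ k, lo i a k = ENNReal.ofReal (Real.exp ε) * lo i a (k + i) := by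
    intro k
    unfold lo
    rw [Nat.add_mod_right]
    split_ifs
    · rw [ha_geo (k + 1), show k + 1 + i = k + i + 1 by ring]
    · exact ha_geo k
  have hrem_geo : ∀ k, rem i a k = ENNReal.ofReal (Real.exp ε) * rem i a (k + i) := by
    intro k
    unfold rem
    rw [Nat.add_mod_right]
    split_ifs
    · rw [ENNReal.mul_sub (fun _ _ => ENNReal.ofReal_ne_top), ← ha_geo k, ha_geo (k + 1),
        show k + 1 + i = k + i + 1 by ring]
    · simp
  have hsplit : ∀ p, Mo Δ i p a = Mo Δ i p (lo i a) + Mo Δ i p (rem i a) := by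
    intro p
    rw [Mo_eq Δ hΔ i hi0, Mo_eq Δ hΔ i hi0, Mo_eq Δ hΔ i hi0, ← ENNReal.tsum_add]
    refine tsum_congr fun k => ?_
    rw [← add_mul, ← lo_add_rem i a ha_mono]
  have hcost : ∀ b : ℕ → ℝ≥0∞,
      cost (volume.withDensity (fun x => b (layerIdx Δ i x))) = Mo Δ i 1 b := by
    intro b; simp [cost, Mo, F]
  have hmass : ∀ b : ℕ → ℝ≥0∞,
      (volume.withDensity (fun x => b (layerIdx Δ i x))) Set.univ = Mo Δ i 0 b := by
    intro b; simp [Mo, F]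
  have hM1 : Mo Δ i 0 a = 1 := by
    rw [← hmass, ← ha_dens]; exact hμa.1.measure_univ
  have hrem_Mo : ∀ p, p ≤ 1 → Mo Δ i p (rem i a) = rem i a (i - 1) *
      (Kc Δ i p * ENNReal.ofReal (wt (Real.exp (-ε)) i p (i - 1))) := by
    intro p hp
    rw [Mo_geo ε Δ hε hΔ i hi0 p hp _ hrem_geo,
      Finset.sum_eq_single (⟨i - 1, by omega⟩ : Fin i)]
    · intro j _ hj
      have : (j : ℕ) % i ≠ i - 1 := by
        rw [Nat.mod_eq_of_lt j.2]
        intro h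
        exact hj (Fin.ext h)
      simp [rem, this]
    · simp
  have hkey : Mo Δ i 1 (lo i a) * Mo Δ i 0 (rem i a) ≤
      Mo Δ i 1 (rem i a) * Mo Δ i 0 (lo i a) := by
    rw [hrem_Mo 0 (by norm_num), hrem_Mo 1 le_rfl, Mo_geo ε Δ hε hΔ i hi0 0 (by norm_num) _ hlo_geo,
      Mo_geo ε Δ hε hΔ i hi0 1 le_rfl _ hlo_geo, Finset.sum_mul, Finset.mul_sum]
    refine Finset.sum_le_sum fun j _ => ?_
    have hw := wt_ineq (Real.exp (-ε)) (Real.exp_pos _)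
      (by rw [Real.exp_lt_one_iff]; linarith) i j j.2
    have hw' := ENNReal.ofReal_le_ofReal hw
    rw [ENNReal.ofReal_mul (wt_nonneg _ (Real.exp_pos _) _ _ _),
      ENNReal.ofReal_mul (wt_nonneg _ (Real.exp_pos _) _ _ _)] at hw'
    calc _ = (lo i a j * rem i a (i - 1) * Kc Δ i 0 * Kc Δ i 1) *
          (ENNReal.ofReal (wt (Real.exp (-ε)) i 1 j) *
            ENNReal.ofReal (wt (Real.exp (-ε)) i 0 (i - 1))) := by ring
      _ ≤ (lo i a j * rem i a (i - 1) * Kc Δ i 0 * Kc Δ i 1) *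
          (ENNReal.ofReal (wt (Real.exp (-ε)) i 1 (i - 1)) *
            ENNReal.ofReal (wt (Real.exp (-ε)) i 0 j)) := by gcongr
      _ = _ := by ring
  have hsum : Mo Δ i 0 (lo i a) + Mo Δ i 0 (rem i a) = 1 := by rw [← hsplit, hM1]
  set M := Mo Δ i 0 (lo i a) with hM
  have hMtop : M ≠ ⊤ := ne_top_of_le_ne_top ENNReal.one_ne_top (hsum ▸ le_self_add)
  have hlo0 : lo i a 0 = a 0 := by
    unfold lo
    rw [if_neg (by rw [Nat.zero_mod]; omega)]
  have hMne : M ≠ 0 := by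
    intro h0
    rw [hM, Mo_eq Δ hΔ i hi0, ENNReal.tsum_eq_zero] at h0
    have h1 := h0 0
    have hK : Kc Δ i 0 * ENNReal.ofReal (Nw 0 0) ≠ 0 := by
      have hi' : (0 : ℝ) < i := by exact_mod_cast hi0
      simp [Kc, Nw, K_zero_ne_zero, hΔ.ne', hi0.ne']
    rw [hlo0] at h1
    have ha0 : a 0 = 0 := (mul_eq_zero.1 h1).resolve_right hK
    have hak : ∀ k, a k = 0 := fun k => le_antisymm (ha0 ▸ ha_mono (Nat.zero_le k)) zero_le
    rw [Mo_eq Δ hΔ i hi0] at hM1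
    simp [hak] at hM1
  have hV : Mo Δ i 1 (lo i a) ≤ M * Mo Δ i 1 a := by
    calc Mo Δ i 1 (lo i a) = Mo Δ i 1 (lo i a) * (M + Mo Δ i 0 (rem i a)) := by
          rw [hsum, mul_one]
      _ = Mo Δ i 1 (lo i a) * M + Mo Δ i 1 (lo i a) * Mo Δ i 0 (rem i a) := mul_add _ _ _
      _ ≤ Mo Δ i 1 (lo i a) * M + Mo Δ i 1 (rem i a) * M := by gcongr
      _ = M * Mo Δ i 1 a := by rw [hsplit 1]; ring
  obtain ⟨b, hb⟩ : ∃ b : ℕ → ℝ≥0∞, ∀ k, b k = M⁻¹ * lo i a k := ⟨_, fun _ => rfl⟩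
  have hscale : ∀ p, Mo Δ i p b = M⁻¹ * Mo Δ i p (lo i a) := by
    intro p
    rw [Mo_eq Δ hΔ i hi0, Mo_eq Δ hΔ i hi0, ← ENNReal.tsum_mul_left]
    exact tsum_congr fun k => by rw [hb, mul_assoc]
  have hb_anti : Antitone b := by
    intro k l hkl
    have := lo_anti i a ha_mono hkl
    rw [hb, hb]
    gcongr
  have hb_geo : ∀ k, b k = ENNReal.ofReal (Real.exp ε) * b (k + i) := by
    intro k
    rw [hb, hb, hlo_geo k]; ring
  have hb0 : b 0 = ENNReal.ofReal (Real.exp ε) * b (i - 1) := by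
    have h1 : lo i a (i - 1) = a (0 + i) := by
      unfold lo
      rw [if_pos (Nat.mod_eq_of_lt (by omega)), show i - 1 + 1 = 0 + i by omega]
    rw [hb, hb, hlo0, h1, ha_geo 0]; ring
  have hbc : cost (volume.withDensity (fun x => b (layerIdx Δ i x))) ≤ cost μa := by
    have hda : μa = volume.withDensity (fun x => a (layerIdx Δ i x)) := ha_dens
    rw [hda, hcost, hcost, hscale, ENNReal.inv_mul_le_iff hMne hMtop]
    exact hV
  have hb1 : IsProbabilityMeasure (volume.withDensity (fun x => b (layerIdx Δ i x))) := by
    constructor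
    rw [hmass, hscale, ← hM, ENNReal.inv_mul_cancel hMne hMtop]
  refine ⟨0, volume.withDensity (fun x => b (layerIdx Δ i x)), b, Nat.zero_le _,
    ⟨hb1, dpc_of ε Δ hΔ i b hb_anti hb_geo⟩, rfl, hb_anti, hb_geo, ?_, hb0, hbc⟩
  intro j hj
  rw [Nat.le_zero.1 hj]
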